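/- arXiv:1909.09328 — 2 statements merged into one kernel-verified Lean document; each statement's English description precedes it below -/
import Mathlib

section
/- Let G = A * B be a free product, and let φ : H → G be an injective group homomorphism from a group H that is freely indecomposable and not infinite cyclic. Then φ(H) is contained in g·A·g⁻¹ or in g·B·g⁻¹ for some g ∈ G. -/
universe u

/-- A group `H` is *freely indecomposable* if it is nontrivial and not isomorphic to a free
product of two nontrivial groups. -/
def FreelyIndecomposable (H : Type u) [Group H] : Prop :=
  Nontrivial H ∧ ∀ (A B : Type u) [Group A] [Group B],
    Nontrivial A → Nontrivial B → IsEmpty (H ≃* Monoid.Coprod A B)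

/-!
Let `Γ` be the free product of subgroups `S i`, acting transitively on `X` with base point `x₀`.
Join each `x : X` to its `S i`-orbit, for every `i`, in a bipartite graph. A spanning tree provides
elements `path x` of `Γ` moving `x₀` to `x`, and turns `g : Γ` and `x : X` into a loop
`(path (g • x))⁻¹ * g * path x` in the stabilizer of `x₀`. This is a cocycle, and it is determined
by its values on the stabilizers in `S i` of orbit representatives and on the edges outside the
tree. Cocycles on a free product can be prescribed freely on the factors, so there is also a cocycle
with values in the free product of those stabilizers and of the free group on those edges, and
restricting it to the stabilizer of `x₀` inverts the obvious map.

For `X = Γ ⧸ K` this is the Kurosh theorem for `K`, and if `K` is freely indecomposable then only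
one of the free factors survives.
-/

section

open Monoid MulAction SemidirectProduct

/-- Nonabelian 1-cocycles of a group action, with coefficients in a group on which `Γ` acts
trivially; equivalently, functors from the action groupoid of `Γ` on `X` to the group `K`. -/
structure ActionCocycle (Γ X K : Type*) [Group Γ] [MulAction Γ X] [Group K] where
  toFun : Γ → X → K
  map_mul' : ∀ g h x, toFun (g * h) x = toFun g (h • x) * toFun h x

namespace ActionCocycle

variable {Γ X K L : Type*} [Group Γ] [MulAction Γ X] [Group K] [Group L]

instance : FunLike (ActionCocycle Γ X K) Γ (X → K) where
  coe := toFun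
  coe_injective c c' h := by cases c; congr

variable (c : ActionCocycle Γ X K)

theorem map_mul (g h : Γ) (x : X) : c (g * h) x = c g (h • x) * c h x :=
  c.map_mul' g h x

theorem map_one (x : X) : c 1 x = 1 := by
  simpa using c.map_mul 1 1 x

theorem map_inv_smul (g : Γ) (x : X) : c g⁻¹ (g • x) = (c g x)⁻¹ := by
  rw [eq_inv_iff_mul_eq_one, ← map_mul, inv_mul_cancel, map_one]

/-- A cocycle restricts to a homomorphism on the stabilizer of each point. -/
@[simps]
def stabilizerHom (x : X) : stabilizer Γ x →* K where
  toFun g := c g x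
  map_one' := c.map_one x
  map_mul' g h := by
    rw [Subgroup.coe_mul, c.map_mul, mem_stabilizer_iff.1 h.2]

/-- The restriction of a cocycle to the action of a subgroup. -/
def restrict (S : Subgroup Γ) : ActionCocycle S X K where
  toFun a := c (a : Γ)
  map_mul' a b := c.map_mul a b

@[simp]
theorem restrict_apply (S : Subgroup Γ) (a : S) (x : X) : c.restrict S a x = c (a : Γ) x :=
  rfl

/-- The push-forward of a cocycle along a homomorphism of coefficient groups. -/
def map (f : K →* L) : ActionCocycle Γ X L where
  toFun g x := f (c g x)
  map_mul' g h x := by rw [c.map_mul, _root_.map_mul]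

@[simp]
theorem map_apply (f : K →* L) (g : Γ) (x : X) : c.map f g x = f (c g x) :=
  rfl

/-- The loop at `x₀` that follows `p` to `x`, then `g` to `g • x`, and goes back along `p`. -/
def loop {x₀ : X} (p : X → Γ) (hp : ∀ x, p x • x₀ = x) :
    ActionCocycle Γ X (stabilizer Γ x₀) where
  toFun g x := ⟨(p (g • x))⁻¹ * g * p x, by
    rw [mem_stabilizer_iff, mul_smul, mul_smul, hp, inv_smul_eq_iff, hp]⟩
  map_mul' g h x := by
    ext
    simp only [Subgroup.coe_mul, mul_smul]
    group

@[simp]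
theorem coe_loop {x₀ : X} (p : X → Γ) (hp : ∀ x, p x • x₀ = x) (g : Γ) (x : X) :
    (loop p hp g x : Γ) = (p (g • x))⁻¹ * g * p x :=
  rfl

theorem stabilizerHom_loop {x₀ : X} {p : X → Γ} (hp : ∀ x, p x • x₀ = x)
    (hc : ∀ x, c (p x) x₀ = 1) (g : Γ) (x : X) : c.stabilizerHom x₀ (loop p hp g x) = c g x := by
  have hc' (y : X) : c (p y)⁻¹ y = 1 := by
    simpa [hp, hc] using c.map_inv_smul (p y) x₀
  simp [c.map_mul, hp, hc, hc']

theorem ext_of_iSup_eq_top {ι : Type*} {S : ι → Subgroup Γ} (hS : ⨆ i, S i = ⊤)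
    {c c' : ActionCocycle Γ X K} (h : ∀ i, c.restrict (S i) = c'.restrict (S i)) : c = c' := by
  refine DFunLike.ext _ _ fun g => ?_
  refine Subgroup.iSup_induction S (C := fun g => c g = c' g) (hS ▸ Subgroup.mem_top g)
    (fun i a ha => DFunLike.congr_fun (h i) ⟨a, ha⟩) ?_ fun g k hg hk => ?_
  · funext x
    rw [map_one, map_one]
  · funext x
    rw [map_mul, map_mul, hg, hk]

/-- The homomorphism to the wreath product of `K` and `Γ` associated with a cocycle on a subgroup
of `Γ`. -/
@[simps]
def wreathHom {S : Subgroup Γ} (c : ActionCocycle S X K) : S →* (X → K) ⋊[mulAutArrow] Γ where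
  toFun a := ⟨fun x => c a (a⁻¹ • x), a⟩
  map_one' := by
    ext x
    · exact c.map_one _
    · rfl
  map_mul' a b := by
    ext x
    · simp only [mul_inv_rev, mul_smul, c.map_mul, smul_inv_smul]
      rfl
    · rfl

/-- The cocycle associated with a section of the projection from the wreath product of `K` and `Γ`
to `Γ`. -/
def ofWreathHom (f : Γ →* (X → K) ⋊[mulAutArrow] Γ) (hf : rightHom.comp f = MonoidHom.id Γ) :
    ActionCocycle Γ X K where
  toFun g x := (f g).left (g • x)
  map_mul' g h x := by
    have hg : (f g).right = g := DFunLike.congr_fun hf g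
    have hh : mulAutArrow g (f h).left (g • h • x) = (f h).left (h • x) :=
      congrArg (f h).left (inv_smul_smul g (h • x))
    rw [_root_.map_mul, mul_left, Pi.mul_apply, hg, mul_smul, hh]

end ActionCocycle

variable {ι Γ : Type*} [Group Γ] {S : ι → Subgroup Γ}

variable (S) in
/-- `Γ` is the internal free product of the subgroups `S i`. -/
def IsFreeProduct : Prop :=
  Function.Bijective (CoprodI.lift fun i => (S i).subtype)

namespace IsFreeProduct

variable (hS : IsFreeProduct S)
include hS

theorem iSup_eq_top : ⨆ i, S i = ⊤ := by
  simpa [CoprodI.range_eq_iSup] using MonoidHom.range_eq_top.2 hS.2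

theorem hom_ext {K : Type*} [Group K] {f f' : Γ →* K}
    (h : ∀ i, f.comp (S i).subtype = f'.comp (S i).subtype) : f = f' := by
  refine MonoidHom.eq_of_eqOn_top fun g _ => ?_
  have hle : ⨆ i, S i ≤ f.eqLocus f' := iSup_le fun i a ha => by
    exact DFunLike.congr_fun (h i) ⟨a, ha⟩
  exact hle (hS.iSup_eq_top ▸ Subgroup.mem_top g)

theorem exists_hom {K : Type*} [Group K] (f : ∀ i, S i →* K) :
    ∃ F : Γ →* K, ∀ i, F.comp (S i).subtype = f i := by
  let e := MulEquiv.ofBijective _ hS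
  refine ⟨(CoprodI.lift f).comp e.symm.toMonoidHom, fun i => MonoidHom.ext fun a => ?_⟩
  have he : e.symm (a : Γ) = CoprodI.of (M := fun i => S i) a :=
    e.symm_apply_eq.2 (CoprodI.lift_of (fun i => (S i).subtype) a).symm
  simp [he]

theorem exists_cocycle {X K : Type*} [MulAction Γ X] [Group K]
    (c : ∀ i, ActionCocycle (S i) X K) :
    ∃ C : ActionCocycle Γ X K, ∀ i, C.restrict (S i) = c i := by
  obtain ⟨F, hF⟩ := hS.exists_hom fun i => (c i).wreathHom
  have hFS (i : ι) (a : S i) : F a = (c i).wreathHom a := DFunLike.congr_fun (hF i) a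
  have hright : rightHom.comp F = MonoidHom.id Γ := hS.hom_ext fun i => by
    ext a
    simp [hFS]
  refine ⟨.ofWreathHom F hright, fun i => DFunLike.ext _ _ fun a => funext fun x => ?_⟩
  change (F a).left ((a : Γ) • x) = c i a x
  rw [hFS, ActionCocycle.wreathHom_apply_left]
  exact congrArg (c i a) (inv_smul_smul a x)

end IsFreeProduct

/-- Representatives of the orbits of a group action, with an element of the group moving the
representative of the orbit of each point to that point. -/
structure OrbitTransversal (Γ X : Type*) [Group Γ] [MulAction Γ X] where
  rep : orbitRel.Quotient Γ X → X
  trans : X → Γ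
  trans_smul_rep : ∀ x, trans x • rep (Quotient.mk'' x) = x
  trans_rep : ∀ ω, trans (rep ω) = 1

namespace OrbitTransversal

variable {X K : Type*} [MulAction Γ X] [Group K]

theorem exists_height_rep_le (height : X → ℕ) :
    ∃ τ : OrbitTransversal Γ X, ∀ x, height (τ.rep (Quotient.mk'' x)) ≤ height x := by
  let rep (ω : orbitRel.Quotient Γ X) : X := Function.argminOn height ω.orbit ω.nonempty_orbit
  have hrep (ω) : rep ω ∈ ω.orbit := Function.argminOn_mem ..
  have hmk (ω) : (Quotient.mk'' (rep ω) : orbitRel.Quotient Γ X) = ω :=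
    orbitRel.Quotient.mem_orbit.1 (hrep ω)
  have htrans (x : X) : ∃ g : Γ, g • rep (Quotient.mk'' x) = x :=
    mem_orbit_symm.1 (hrep (Quotient.mk'' x))
  choose t ht using htrans
  refine ⟨⟨rep, fun x => t x * (t (rep (Quotient.mk'' x)))⁻¹, fun x => ?_, fun ω => ?_⟩,
    fun x => ?_⟩
  · have := ht (rep (Quotient.mk'' x))
    rw [hmk] at this
    rw [mul_smul, inv_smul_eq_iff.2 this.symm, ht]
  · rw [hmk, mul_inv_cancel]
  · exact Function.argminOn_le _ _ (orbitRel.Quotient.mem_orbit.2 rfl)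

variable (τ : OrbitTransversal Γ X)

/-- The representative of the orbit of a point. -/
abbrev base (x : X) : X :=
  τ.rep (Quotient.mk'' x)

theorem trans_smul_base (x : X) : τ.trans x • τ.base x = x :=
  τ.trans_smul_rep x

theorem mk_rep (ω : orbitRel.Quotient Γ X) : Quotient.mk'' (τ.rep ω) = ω := by
  induction ω using Quotient.inductionOn' with
  | h x => exact Quotient.sound' (mem_orbit_symm.1 ⟨τ.trans x, τ.trans_smul_rep x⟩)

theorem base_rep (ω : orbitRel.Quotient Γ X) : τ.base (τ.rep ω) = τ.rep ω := by
  rw [base, mk_rep]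

theorem mk_smul (a : Γ) (x : X) :
    (Quotient.mk'' (a • x) : orbitRel.Quotient Γ X) = Quotient.mk'' x :=
  Quotient.sound' ⟨a, rfl⟩

theorem base_smul (a : Γ) (x : X) : τ.base (a • x) = τ.base x := by
  rw [base, mk_smul, base]

/-- The loop at the representative of the orbit of `x` that passes through `x` and `a • x`. -/
def baseLoop (a : Γ) (x : X) : stabilizer Γ (τ.base x) :=
  ⟨(τ.trans (a • x))⁻¹ * a * τ.trans x, by
    rw [mem_stabilizer_iff, mul_smul, mul_smul, trans_smul_base, inv_smul_eq_iff, ← τ.base_smul a x,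
      trans_smul_base]⟩

theorem cocycle_apply (c : ActionCocycle Γ X K) (a : Γ) (x : X) :
    c a x = c (τ.trans (a • x)) (τ.base (a • x)) * c.stabilizerHom _ (τ.baseLoop a x) *
      (c (τ.trans x) (τ.base x))⁻¹ := by
  have h : c (a * τ.trans x) (τ.base x) =
      c (τ.trans (a • x) * (τ.baseLoop a x : Γ)) (τ.base x) := by
    simp [baseLoop, mul_assoc]
  rw [c.map_mul, c.map_mul, trans_smul_base, mem_stabilizer_iff.1 (τ.baseLoop a x).2] at h
  rw [eq_mul_inv_iff_mul_eq, h, base_smul, ActionCocycle.stabilizerHom_apply]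

theorem cocycle_ext {c c' : ActionCocycle Γ X K}
    (htrans : ∀ x, c (τ.trans x) (τ.base x) = c' (τ.trans x) (τ.base x))
    (hrep : ∀ ω, c.stabilizerHom (τ.rep ω) = c'.stabilizerHom (τ.rep ω)) : c = c' := by
  refine DFunLike.ext _ _ fun a => funext fun x => ?_
  have hbase : c.stabilizerHom (τ.base x) = c'.stabilizerHom (τ.base x) := hrep _
  rw [τ.cocycle_apply c, τ.cocycle_apply c', htrans, htrans, hbase]

variable (w : X → K) (θ : ∀ ω, stabilizer Γ (τ.rep ω) →* K)

theorem stabilizer_hom_congr {ω ω' : orbitRel.Quotient Γ X} (hω : ω = ω')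
    {a : stabilizer Γ (τ.rep ω)} {a' : stabilizer Γ (τ.rep ω')} (ha : (a : Γ) = a') :
    θ ω a = θ ω' a' := by
  subst hω
  rw [Subtype.ext ha]

theorem stabilizer_hom_baseLoop_mul (a b : Γ) (x : X) :
    θ _ (τ.baseLoop (a * b) x) = θ _ (τ.baseLoop a (b • x)) * θ _ (τ.baseLoop b x) := by
  let s : stabilizer Γ (τ.base x) :=
    ⟨τ.baseLoop a (b • x), τ.base_smul b x ▸ (τ.baseLoop a (b • x)).2⟩
  have hs : τ.baseLoop (a * b) x = s * τ.baseLoop b x := by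
    ext
    simp [s, baseLoop, mul_smul, mul_assoc]
  rw [hs, map_mul]
  exact congrArg (· * _) (τ.stabilizer_hom_congr θ (mk_smul b x).symm rfl)

/-- The cocycle with prescribed values `w x` on the elements `trans x` and `θ ω` on the stabilizers
of the representatives. -/
def cocycle : ActionCocycle Γ X K where
  toFun a x := w (a • x) * θ _ (τ.baseLoop a x) * (w x)⁻¹
  map_mul' a b x := by
    rw [stabilizer_hom_baseLoop_mul, mul_smul]
    group

variable {w} (hw : ∀ ω, w (τ.rep ω) = 1)
include hw

theorem cocycle_trans (x : X) : τ.cocycle w θ (τ.trans x) (τ.base x) = w x := by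
  have hloop : τ.baseLoop (τ.trans x) (τ.base x) = 1 := by
    ext
    simp [baseLoop, τ.trans_smul_base x, trans_rep]
  change w (τ.trans x • τ.base x) * θ _ (τ.baseLoop (τ.trans x) (τ.base x)) * (w (τ.base x))⁻¹ = _
  rw [hloop, trans_smul_base, map_one, base, hw, inv_one, mul_one, mul_one]

theorem stabilizerHom_cocycle (ω : orbitRel.Quotient Γ X) :
    (τ.cocycle w θ).stabilizerHom (τ.rep ω) = θ ω := by
  ext a
  have ha : (a : Γ) • τ.rep ω = τ.rep ω := a.2
  have hloop : θ _ (τ.baseLoop a (τ.rep ω)) = θ ω a :=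
    τ.stabilizer_hom_congr θ (τ.mk_rep ω) (by simp [baseLoop, ha, trans_rep])
  change w ((a : Γ) • τ.rep ω) * θ _ (τ.baseLoop a (τ.rep ω)) * (w (τ.rep ω))⁻¹ = _
  rw [hloop, ha, hw, one_mul, inv_one, mul_one]

end OrbitTransversal

/-- A spanning tree of the graph joining each point of `X` to its orbits under all the `S i`, rooted
at `x₀`. An orbit hangs from its representative, and a point `x ≠ x₀` hangs from one of its orbits,
the representative of which is closer to the root. -/
structure KuroshTree {X : Type*} [MulAction Γ X] (S : ι → Subgroup Γ) (x₀ : X) where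
  transversal : ∀ i, OrbitTransversal (S i) X
  height : X → ℕ
  exists_height_base_lt : ∀ x ≠ x₀, ∃ i, height ((transversal i).base x) < height x

namespace KuroshTree

section Existence

variable (hS : ⨆ i, S i = ⊤)
include hS

theorem exists_list_prod_eq (g : Γ) : ∃ l : List Γ, (∀ a ∈ l, ∃ i, a ∈ S i) ∧ l.prod = g := by
  refine Subgroup.iSup_induction S
    (C := fun g => ∃ l : List Γ, (∀ a ∈ l, ∃ i, a ∈ S i) ∧ l.prod = g)
    (hS ▸ Subgroup.mem_top g) (fun i a ha => ?_) ⟨[], by simp⟩ ?_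
  · exact ⟨[a], by simpa using ⟨i, ha⟩, by simp⟩
  · rintro _ _ ⟨l, hl, rfl⟩ ⟨m, hm, rfl⟩
    exact ⟨l ++ m, fun a ha => (List.mem_append.1 ha).elim (hl a) (hm a), List.prod_append⟩

variable {X : Type*} [MulAction Γ X] [IsPretransitive Γ X] (x₀ : X)

theorem exists_height : ∃ height : X → ℕ,
    ∀ x ≠ x₀, ∃ i, ∃ a : S i, height (a • x) < height x := by
  let words (x : X) : Set (List Γ) := {l | (∀ a ∈ l, ∃ i, a ∈ S i) ∧ l.prod • x₀ = x}
  have hwords (x : X) : (words x).Nonempty := by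
    obtain ⟨g, rfl⟩ := exists_smul_eq Γ x₀ x
    obtain ⟨l, hl, rfl⟩ := exists_list_prod_eq hS g
    exact ⟨l, hl, rfl⟩
  let word (x : X) : List Γ := Function.argminOn List.length (words x) (hwords x)
  refine ⟨fun x => (word x).length, fun x hx => ?_⟩
  obtain ⟨hmem, hprod⟩ : word x ∈ words x := Function.argminOn_mem ..
  match hl : word x with
  | [] => exact absurd (by simpa [hl] using hprod.symm) hx
  | a :: l =>
    rw [hl, List.forall_mem_cons] at hmem
    obtain ⟨⟨i, hi⟩, hmem⟩ := hmem
    have htail : l ∈ words (a⁻¹ • x) := ⟨hmem, by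
      rw [eq_inv_smul_iff, ← mul_smul, ← List.prod_cons, ← hl, hprod]⟩
    exact ⟨i, ⟨a, hi⟩⁻¹, (Function.argminOn_le List.length _ htail).trans_lt (by simp [hl])⟩

theorem nonempty : Nonempty (KuroshTree S x₀) := by
  obtain ⟨height, hheight⟩ := exists_height hS x₀
  choose τ hτ using fun i => OrbitTransversal.exists_height_rep_le (Γ := S i) height
  refine ⟨⟨τ, height, fun x hx => ?_⟩⟩
  obtain ⟨i, a, ha⟩ := hheight x hx
  exact ⟨i, (τ i).base_smul a x ▸ (hτ i (a • x)).trans_lt ha⟩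

end Existence

variable {X : Type*} [MulAction Γ X] {x₀ : X} (T : KuroshTree S x₀)

open Classical in
/-- The element of `Γ` moving the root to `x` that is read off the branch of the tree ending in
`x`. -/
noncomputable def path (x : X) : Γ :=
  if hx : x = x₀ then 1
  else
    let i := (T.exists_height_base_lt x hx).choose
    (T.transversal i).trans x * path ((T.transversal i).base x)
termination_by T.height x
decreasing_by exact (T.exists_height_base_lt x hx).choose_spec

theorem path_root : T.path x₀ = 1 := by
  rw [path, dif_pos rfl]

@[elab_as_elim]
theorem induction {P : X → Prop} (root : P x₀)
    (edge : ∀ i x, T.path x = (T.transversal i).trans x * T.path ((T.transversal i).base x) →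
      P ((T.transversal i).base x) → P x) (x : X) : P x := by
  induction x using path.induct T with
  | case1 => exact root
  | case2 x hx i ih => exact edge i x (by rw [path, dif_neg hx]) ih

theorem path_smul_root (x : X) : T.path x • x₀ = x := by
  induction x using T.induction with
  | root => rw [path_root, one_smul]
  | edge i x hx ih => rw [hx, mul_smul, ih, ← Subgroup.smul_def, OrbitTransversal.trans_smul_base]

/-- The loops at the root defined by the paths of the tree, as a cocycle. -/
noncomputable abbrev loop : ActionCocycle Γ X (stabilizer Γ x₀) :=
  .loop T.path T.path_smul_root

/-- The loop through the two edges joining the orbit of `e.2` under `S e.1` to its representative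
and to `e.2`. -/
noncomputable def edgeLoop (e : ι × X) : stabilizer Γ x₀ :=
  T.loop ((T.transversal e.1).trans e.2) ((T.transversal e.1).base e.2)

theorem edgeLoop_eq_one {i : ι} {x : X}
    (h : T.path x = (T.transversal i).trans x * T.path ((T.transversal i).base x)) :
    T.edgeLoop (i, x) = 1 := by
  have hx : ((T.transversal i).trans x : Γ) • (T.transversal i).base x = x :=
    (T.transversal i).trans_smul_base x
  ext
  rw [edgeLoop, ActionCocycle.coe_loop, hx, mul_assoc, ← h, inv_mul_cancel, Subgroup.coe_one]

theorem edgeLoop_rep (i : ι) (ω : orbitRel.Quotient (S i) X) :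
    T.edgeLoop (i, (T.transversal i).rep ω) = 1 :=
  T.edgeLoop_eq_one (by
    rw [OrbitTransversal.trans_rep, OrbitTransversal.base_rep, Subgroup.coe_one, one_mul])

/-- The edges outside the tree. -/
abbrev Edge : Type _ :=
  {e : ι × X // T.edgeLoop e ≠ 1}

/-- The stabilizer in `S i` of the representative of an `S i`-orbit. -/
abbrev vertexGroup (v : Σ i, orbitRel.Quotient (S i) X) : Subgroup (S v.1) :=
  stabilizer (S v.1) ((T.transversal v.1).rep v.2)

/-- The free product in the Kurosh theorem. -/
abbrev Factors : Type _ :=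
  Coprod (FreeGroup T.Edge) (CoprodI fun v => T.vertexGroup v)

/-- The image of a vertex group in the stabilizer of the root. -/
noncomputable def vertexHom (v : Σ i, orbitRel.Quotient (S i) X) :
    T.vertexGroup v →* stabilizer Γ x₀ :=
  (T.loop.restrict (S v.1)).stabilizerHom _

theorem coe_vertexHom (v : Σ i, orbitRel.Quotient (S i) X) (a : T.vertexGroup v) :
    (T.vertexHom v a : Γ) = (T.path ((T.transversal v.1).rep v.2))⁻¹ * ((a : S v.1) : Γ) *
      T.path ((T.transversal v.1).rep v.2) := by
  have ha : ((a : S v.1) : Γ) • (T.transversal v.1).rep v.2 = (T.transversal v.1).rep v.2 := a.2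
  rw [vertexHom, ActionCocycle.stabilizerHom_apply, ActionCocycle.restrict_apply,
    ActionCocycle.coe_loop, ha]

/-- The isomorphism of the Kurosh theorem, see `KuroshTree.bijective_toStabilizer`. -/
noncomputable def toStabilizer : T.Factors →* stabilizer Γ x₀ :=
  Coprod.lift (FreeGroup.lift fun e => T.edgeLoop e) (CoprodI.lift T.vertexHom)

theorem toStabilizer_inl_of (e : T.Edge) :
    T.toStabilizer (Coprod.inl (FreeGroup.of e)) = T.edgeLoop e := by
  simp [toStabilizer]

theorem toStabilizer_inr_of {v : Σ i, orbitRel.Quotient (S i) X} (a : T.vertexGroup v) :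
    T.toStabilizer (Coprod.inr (CoprodI.of a)) = T.vertexHom v a := by
  simp [toStabilizer]

open Classical in
/-- The value of the universal cocycle along an edge: a free generator, unless the edge is in the
tree. -/
noncomputable def edgeValue (e : ι × X) : T.Factors :=
  if he : T.edgeLoop e = 1 then 1 else Coprod.inl (FreeGroup.of ⟨e, he⟩)

theorem toStabilizer_edgeValue (e : ι × X) : T.toStabilizer (T.edgeValue e) = T.edgeLoop e := by
  by_cases he : T.edgeLoop e = 1 <;> simp [edgeValue, toStabilizer_inl_of, he]

theorem exists_universalCocycle (hS : IsFreeProduct S) : ∃ C : ActionCocycle Γ X T.Factors,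
    (∀ i x, C ((T.transversal i).trans x) ((T.transversal i).base x) = T.edgeValue (i, x)) ∧
    ∀ v, (C.restrict (S v.1)).stabilizerHom ((T.transversal v.1).rep v.2) =
      Coprod.inr.comp (CoprodI.of (M := fun v => T.vertexGroup v) (i := v)) := by
  let inclusion (i : ι) (ω : orbitRel.Quotient (S i) X) :
      stabilizer (S i) ((T.transversal i).rep ω) →* T.Factors :=
    Coprod.inr.comp (CoprodI.of (M := fun v => T.vertexGroup v) (i := ⟨i, ω⟩))
  have hrep (i : ι) (ω : orbitRel.Quotient (S i) X) :
      T.edgeValue (i, (T.transversal i).rep ω) = 1 := dif_pos (T.edgeLoop_rep i ω)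
  obtain ⟨C, hC⟩ := hS.exists_cocycle fun i =>
    (T.transversal i).cocycle (fun x => T.edgeValue (i, x)) (inclusion i)
  refine ⟨C, fun i x => ?_, fun v => ?_⟩
  · rw [← ActionCocycle.restrict_apply, hC, OrbitTransversal.cocycle_trans _ _ (hrep i)]
  · rw [hC, OrbitTransversal.stabilizerHom_cocycle _ _ (hrep v.1)]

theorem bijective_toStabilizer (hS : IsFreeProduct S) : Function.Bijective T.toStabilizer := by
  obtain ⟨C, hedge, hvertex⟩ := T.exists_universalCocycle hS
  have hvertexHom (v) : T.vertexHom v = T.toStabilizer.comp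
      ((C.restrict (S v.1)).stabilizerHom ((T.transversal v.1).rep v.2)) := by
    ext a
    simp [hvertex, toStabilizer_inr_of]
  have hloop : C.map T.toStabilizer = T.loop := by
    refine ActionCocycle.ext_of_iSup_eq_top hS.iSup_eq_top fun i =>
      (T.transversal i).cocycle_ext (fun x => ?_) fun ω => ?_
    · simp [hedge, toStabilizer_edgeValue, edgeLoop]
    · exact (hvertexHom ⟨i, ω⟩).symm
  have hpath (x : X) : C (T.path x) x₀ = 1 := by
    induction x using T.induction with
    | root => rw [path_root, C.map_one]
    | edge i x hx ih =>
      rw [hx, C.map_mul, path_smul_root, ih, mul_one, hedge, edgeValue,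
        dif_pos (T.edgeLoop_eq_one hx)]
  have hleft : (C.stabilizerHom x₀).comp T.toStabilizer = MonoidHom.id _ := by
    refine Coprod.hom_ext (FreeGroup.ext_hom _ _ fun e => ?_) (CoprodI.ext_hom _ _ fun v => ?_)
    · have hstab : C.stabilizerHom x₀ (T.edgeLoop e) = T.edgeValue e :=
        (C.stabilizerHom_loop T.path_smul_root hpath _ _).trans (hedge _ _)
      simp only [MonoidHom.comp_apply, toStabilizer_inl_of, hstab, MonoidHom.id_apply]
      exact dif_neg e.2
    · ext1 a
      have hstab : C.stabilizerHom x₀ (T.vertexHom v a) =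
          (C.restrict (S v.1)).stabilizerHom ((T.transversal v.1).rep v.2) a :=
        C.stabilizerHom_loop T.path_smul_root hpath _ _
      simp only [MonoidHom.comp_apply, toStabilizer_inr_of, hstab, hvertex, MonoidHom.id_apply]
  have hright (g : stabilizer Γ x₀) : T.toStabilizer (C.stabilizerHom x₀ g) = g := by
    have hg : T.toStabilizer (C g x₀) = T.loop g x₀ := by rw [← hloop, ActionCocycle.map_apply]
    ext
    simp [hg, mem_stabilizer_iff.1 g.2, path_root]
  exact Function.bijective_iff_has_inverse.2 ⟨_, fun p => DFunLike.congr_fun hleft p, hright⟩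

end KuroshTree

section Splitting

variable {P Q : Type*} [Group P] [Group Q]

theorem coprod_inl_surjective [Subsingleton Q] :
    Function.Surjective (Coprod.inl : P →* Coprod P Q) := by
  have hinr : (Coprod.inr : Q →* Coprod P Q) = 1 := Subsingleton.elim _ _
  have hsup := Coprod.range_inl_sup_range_inr (G := P) (H := Q)
  rwa [MonoidHom.range_eq_bot_iff.2 hinr, sup_bot_eq, MonoidHom.range_eq_top] at hsup

theorem coprod_inr_surjective [Subsingleton P] :
    Function.Surjective (Coprod.inr : Q →* Coprod P Q) := by
  have hinl : (Coprod.inl : P →* Coprod P Q) = 1 := Subsingleton.elim _ _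
  have hsup := Coprod.range_inl_sup_range_inr (G := P) (H := Q)
  rwa [MonoidHom.range_eq_bot_iff.2 hinl, bot_sup_eq, MonoidHom.range_eq_top] at hsup

variable {J : Type*} {M : J → Type*} [∀ j, Monoid (M j)]

open Classical in
/-- A free product of a family splits as the free product of one factor and of the free product of
the other ones. -/
noncomputable def coprodSplitEquiv (j : J) :
    Coprod (M j) (CoprodI fun k : {k // k ≠ j} => M k) ≃* CoprodI M :=
  MonoidHom.toMulEquiv
    (Coprod.lift CoprodI.of (CoprodI.lift fun _ => CoprodI.of))
    (CoprodI.lift fun k =>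
      if h : k = j then h ▸ Coprod.inl
      else Coprod.inr.comp (CoprodI.of (M := fun k : {k // k ≠ j} => M k) (i := ⟨k, h⟩)))
    (by
      refine Coprod.hom_ext ?_ (CoprodI.ext_hom _ _ fun k => ?_) <;> ext a
      · simp
      · simp [k.2])
    (by
      refine CoprodI.ext_hom _ _ fun k => ?_
      ext a
      by_cases h : k = j
      · subst h
        simp
      · simp [h])

theorem coprodSplitEquiv_inl {j : J} (a : M j) :
    coprodSplitEquiv (M := M) j (Coprod.inl a) = CoprodI.of a :=
  rfl

end Splitting

namespace FreelyIndecomposable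

variable {H : Type u} [Group H] (hH : FreelyIndecomposable H)
include hH

theorem subsingleton_or_subsingleton {P Q : Type*} [Group P] [Group Q] (e : H ≃* Coprod P Q) :
    Subsingleton P ∨ Subsingleton Q := by
  by_contra! hPQ
  obtain ⟨_, _⟩ := hPQ
  let eP := MonoidHom.ofInjective (f := e.symm.toMonoidHom.comp (Coprod.inl : P →* Coprod P Q))
    (e.symm.injective.comp Coprod.inl_injective)
  let eQ := MonoidHom.ofInjective (f := e.symm.toMonoidHom.comp (Coprod.inr : Q →* Coprod P Q))
    (e.symm.injective.comp Coprod.inr_injective)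
  exact (hH.2 _ _ eP.symm.toEquiv.nontrivial eQ.symm.toEquiv.nontrivial).false
    (e.trans (eP.coprodCongr eQ))

theorem exists_surjective_of {J : Type*} {M : J → Type*} [∀ j, Group (M j)] (e : H ≃* CoprodI M) :
    ∃ j, Function.Surjective (CoprodI.of : M j →* CoprodI M) := by
  have := hH.1
  obtain ⟨j, hj⟩ : ∃ j, Nontrivial (M j) := by
    by_contra! hM
    have hid : MonoidHom.id (CoprodI M) = 1 :=
      CoprodI.ext_hom _ _ fun j => Subsingleton.elim _ _
    have : Subsingleton (CoprodI M) :=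
      subsingleton_of_forall_eq 1 fun x => DFunLike.congr_fun hid x
    exact not_subsingleton H e.toEquiv.subsingleton
  have : Subsingleton (CoprodI fun k : {k // k ≠ j} => M k) :=
    (hH.subsingleton_or_subsingleton (e.trans (coprodSplitEquiv j).symm)).resolve_left
      (not_subsingleton (M j))
  have hsurj := (coprodSplitEquiv (M := M) j).surjective.comp coprod_inl_surjective
  exact ⟨j, fun x => (hsurj x).imp fun a ha => (coprodSplitEquiv_inl a).symm.trans ha⟩

theorem nonempty_mulEquiv_int {E : Type*} (e : H ≃* FreeGroup E) :
    Nonempty (H ≃* Multiplicative ℤ) := by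
  let e' := e.trans freeGroupEquivCoprodI
  obtain ⟨j, hj⟩ := hH.exists_surjective_of e'
  exact ⟨(e'.trans (MulEquiv.ofBijective _ ⟨CoprodI.of_injective j, hj⟩).symm).trans
    FreeGroup.mulEquivIntOfUnique⟩

theorem exists_range_le_map_conj (hS : IsFreeProduct S) (hcyc : IsEmpty (H ≃* Multiplicative ℤ))
    {φ : H →* Γ} (hφ : Function.Injective φ) :
    ∃ i g, φ.range ≤ (S i).map (MulAut.conj g).toMonoidHom := by
  have hstab : stabilizer Γ ((1 : Γ) : Γ ⧸ φ.range) = φ.range := stabilizer_quotient φ.range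
  obtain ⟨T⟩ := KuroshTree.nonempty hS.iSup_eq_top ((1 : Γ) : Γ ⧸ φ.range)
  have hbij := T.bijective_toStabilizer hS
  let e : H ≃* T.Factors :=
    ((MonoidHom.ofInjective hφ).trans (MulEquiv.subgroupCongr hstab.symm)).trans
      (MulEquiv.ofBijective _ hbij).symm
  rcases hH.subsingleton_or_subsingleton e with _ | _
  · have hinr : Function.Surjective (Coprod.inr : _ →* T.Factors) := coprod_inr_surjective
    obtain ⟨v, hv⟩ := hH.exists_surjective_of
      (e.trans (MulEquiv.ofBijective _ ⟨Coprod.inr_injective, hinr⟩).symm)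
    refine ⟨v.1, (T.path ((T.transversal v.1).rep v.2))⁻¹, fun g hg => ?_⟩
    obtain ⟨a, ha⟩ := hbij.2.comp (hinr.comp hv) ⟨g, hstab.ge hg⟩
    refine ⟨_, (a : S v.1).2, ?_⟩
    have h := congrArg Subtype.val ha
    simpa [T.toStabilizer_inr_of, T.coe_vertexHom] using h
  · have hinl : Function.Surjective (Coprod.inl : _ →* T.Factors) := coprod_inl_surjective
    obtain ⟨f⟩ := hH.nonempty_mulEquiv_int
      (e.trans (MulEquiv.ofBijective _ ⟨Coprod.inl_injective, hinl⟩).symm)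
    exact hcyc.elim f

end FreelyIndecomposable

theorem isFreeProduct_range_inl_range_inr (A B : Type*) [Group A] [Group B] :
    IsFreeProduct fun b => cond b (Coprod.inl : A →* Coprod A B).range
      (Coprod.inr : B →* Coprod A B).range := by
  let S (b : Bool) : Subgroup (Coprod A B) := cond b Coprod.inl.range Coprod.inr.range
  let f : CoprodI (fun b => S b) →* Coprod A B := CoprodI.lift fun b => (S b).subtype
  let inlS : A →* S true := (Coprod.inl : A →* Coprod A B).rangeRestrict
  let inrS : B →* S false := (Coprod.inr : B →* Coprod A B).rangeRestrict
  let inv : Coprod A B →* CoprodI fun b => S b :=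
    Coprod.lift ((CoprodI.of (M := fun b => S b)).comp inlS)
      ((CoprodI.of (M := fun b => S b)).comp inrS)
  have hleft : inv.comp f = MonoidHom.id _ := by
    refine CoprodI.ext_hom _ _ fun b => MonoidHom.ext ?_
    cases b <;> rintro ⟨_, a, rfl⟩ <;> rfl
  have hright : f.comp inv = MonoidHom.id _ := Coprod.hom_ext rfl rfl
  exact (MonoidHom.toMulEquiv f inv hleft hright).bijective

end

/-- Let `G = A * B` be a free product, and let `φ : H → G` be an injective group
homomorphism from a group `H` that is freely indecomposable and not infinite cyclic.  Then `φ(H)`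
is contained in `g·A·g⁻¹` or in `g·B·g⁻¹` for some `g ∈ G` (Kurosh subgroup theorem). -/
theorem stmt7 {H : Type u} [Group H] {A B : Type u} [Group A] [Group B]
    (hind : FreelyIndecomposable H)
    (hcyc : IsEmpty (H ≃* Multiplicative ℤ))
    (φ : H →* Monoid.Coprod A B) (hφ : Function.Injective φ) :
    ∃ g : Monoid.Coprod A B,
      φ.range ≤ Subgroup.map (MulAut.conj g).toMonoidHom
          (Monoid.Coprod.inl : A →* Monoid.Coprod A B).range ∨
      φ.range ≤ Subgroup.map (MulAut.conj g).toMonoidHom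
          (Monoid.Coprod.inr : B →* Monoid.Coprod A B).range := by
  obtain ⟨b, g, hg⟩ := hind.exists_range_le_map_conj (isFreeProduct_range_inl_range_inr A B) hcyc hφ
  cases b
  · exact ⟨g, .inr hg⟩
  · exact ⟨g, .inl hg⟩
end

section
/- Let G = A₁ * ⋯ * Aₘ and G' = A₁' * ⋯ * Aₘ' be free products where every factor A_i and A_j' is freely indecomposable and not infinite cyclic, and let φ : G → G' be an isomorphism. Suppose that for each i there is a nontrivial subgroup H_i ≤ A_i with φ(H_i) ≤ A_{σ(i)}' for some function σ. Then σ is uniquely determined on indices with H_i ≠ 1, and for each such i, φ(A_i) ≤ A_{σ(i)}'. -/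
universe u

/-!
By a weak form of the Kurosh subgroup theorem, the intersection of a subgroup `K` of a free product
with a factor `A j` is a free factor of `K`. Hence if `K` is freely indecomposable and meets `A j`
nontrivially, then `K ≤ A j`; applied to `K = φ (A i)` this gives the inclusions, while uniqueness
of `σ` holds because distinct factors meet trivially.

The free factor is found through nonabelian cocycles. Let `G` be the free product, acting on
`X = G ⧸ K` with base point `o`. A transversal `t` gives the cocycle
`(g, x) ↦ (t (g • x))⁻¹ * g * t x` with values in `K`. A cocycle on a free product is the same as a
family of cocycles on the factors, so this one lifts to a group `L * M`, where `L = K ⊓ A j`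
receives the values of the elements of `A j` on the `A j`-orbit of `o`, and `M` is generated by all
others. If `t` is read off from paths that start in this orbit and never apply an element of `A j`
inside it, then the lift is trivial on all `(t x, o)`, and therefore restricts to an inverse of
`L * M → K`.
-/

section Cocycle

variable {G X Q R : Type*} [Group G] [MulAction G X] [Group Q] [Group R]

/-- A nonabelian 1-cocycle for the action of `G` on `X` with values in `Q`, that is, a functor from
the action groupoid to `Q`; the value `c g x` belongs to the arrow from `x` to `g • x`. -/
def IsCocycle (c : G → X → Q) : Prop :=
  ∀ g h x, c (g * h) x = c g (h • x) * c h x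

namespace IsCocycle

variable {c : G → X → Q}

theorem apply_one (hc : IsCocycle c) (x : X) : c 1 x = 1 := by
  simpa using hc 1 1 x

theorem monoidHom_comp (hc : IsCocycle c) (f : Q →* R) : IsCocycle fun g x => f (c g x) :=
  fun g h x => by simp only [hc g h x, map_mul]

/-- The restriction of a cocycle to the vertex group at `o` of the action groupoid. -/
def stabilizerHom (hc : IsCocycle c) (o : X) : MulAction.stabilizer G o →* Q where
  toFun k := c k o
  map_one' := hc.apply_one o
  map_mul' k l := by rw [Subgroup.coe_mul, hc, MulAction.mem_stabilizer_iff.1 l.2]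

end IsCocycle

variable {o : X} {t : X → G}

/-- The cocycle of Schreier elements of a transversal `t` of the stabilizer of `o`: it closes up
the arrow from `x` to `g • x` to a loop at `o`. -/
def schreierCocycle (ht : ∀ x, t x • o = x) (g : G) (x : X) : MulAction.stabilizer G o :=
  ⟨(t (g • x))⁻¹ * g * t x, by
    rw [MulAction.mem_stabilizer_iff, mul_smul, mul_smul, ht, inv_smul_eq_iff, ht]⟩

@[simp]
theorem coe_schreierCocycle (ht : ∀ x, t x • o = x) (g : G) (x : X) :
    (schreierCocycle ht g x : G) = (t (g • x))⁻¹ * g * t x :=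
  rfl

theorem isCocycle_schreierCocycle (ht : ∀ x, t x • o = x) : IsCocycle (schreierCocycle ht) :=
  fun g h x => Subtype.ext <| by
    simp only [Subgroup.coe_mul, coe_schreierCocycle, mul_smul]
    group

theorem schreierCocycle_transversal (ht : ∀ x, t x • o = x) (hto : t o = 1) (x : X) :
    schreierCocycle ht (t x) o = 1 :=
  Subtype.ext <| by simp [ht, hto]

theorem schreierCocycle_stabilizer (ht : ∀ x, t x • o = x) (hto : t o = 1)
    (k : MulAction.stabilizer G o) : schreierCocycle ht k o = k :=
  Subtype.ext <| by simp [MulAction.mem_stabilizer_iff.1 k.2, hto]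

namespace IsCocycle

variable {c : G → X → Q}

theorem apply_schreierCocycle (hc : IsCocycle c) (ht : ∀ x, t x • o = x)
    (hct : ∀ x, c (t x) o = 1) (g : G) (x : X) : c (schreierCocycle ht g x) o = c g x := by
  have h : t (g • x) * schreierCocycle ht g x = g * t x := by simp [mul_assoc]
  have h' := congrArg (c · o) h
  simpa only [hc _ _ o, MulAction.mem_stabilizer_iff.1 (schreierCocycle ht g x).2, hct, ht,
    one_mul, mul_one] using h'

theorem bijective_of_lift_schreierCocycle (hc : IsCocycle c) (ht : ∀ x, t x • o = x)
    (hct : ∀ x, c (t x) o = 1) {f : Q →* MulAction.stabilizer G o}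
    (hf : ∀ g x, f (c g x) = schreierCocycle ht g x)
    (hgen : Subgroup.closure {q | ∃ g x, c g x = q} = ⊤) : Function.Bijective f := by
  have hto : t o = 1 := by
    simpa [hct, ht, eq_comm] using congrArg Subtype.val (hf (t o) o)
  have hleft : (hc.stabilizerHom o).comp f = MonoidHom.id Q := by
    refine MonoidHom.eq_of_eqOn_dense hgen ?_
    rintro _ ⟨g, x, rfl⟩
    exact (congrArg (hc.stabilizerHom o) (hf g x)).trans (hc.apply_schreierCocycle ht hct g x)
  exact ⟨Function.LeftInverse.injective (g := hc.stabilizerHom o) (DFunLike.congr_fun hleft),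
    fun k => ⟨c k o, (hf k o).trans (schreierCocycle_stabilizer ht hto k)⟩⟩

end IsCocycle

end Cocycle

section FreeFactor

variable {G H : Type*} [Group G] [Group H]

/-- A subgroup `L` of `G` is a free factor of `G` if `G` is the internal free product of `L` and
some other subgroup. -/
def IsFreeFactor (L : Subgroup G) : Prop :=
  ∃ M : Subgroup G, Function.Bijective (Monoid.Coprod.lift L.subtype M.subtype)

theorem injOn_coprodLift_range_inl (L M : Subgroup G) :
    Set.InjOn (Monoid.Coprod.lift L.subtype M.subtype)
      (Monoid.Coprod.inl : L →* Monoid.Coprod L M).range := by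
  rintro _ ⟨l, rfl⟩ _ ⟨l', rfl⟩ h
  exact congrArg _ (Subtype.ext (by simpa using h))

theorem injOn_coprodLift_range_inr (L M : Subgroup G) :
    Set.InjOn (Monoid.Coprod.lift L.subtype M.subtype)
      (Monoid.Coprod.inr : M →* Monoid.Coprod L M).range := by
  rintro _ ⟨m, rfl⟩ _ ⟨m', rfl⟩ h
  exact congrArg _ (Subtype.ext (by simpa using h))

theorem closure_coprod_eq_top {S : Set H} {T : Set (Monoid.Coprod G (Subgroup.closure S))}
    (hinl : ∀ g, Monoid.Coprod.inl g ∈ T)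
    (hinr : ∀ s (hs : s ∈ S), Monoid.Coprod.inr ⟨s, Subgroup.subset_closure hs⟩ ∈ T) :
    Subgroup.closure T = ⊤ := by
  rw [eq_top_iff, ← Monoid.Coprod.range_inl_sup_range_inr]
  refine sup_le ?_ ?_
  · rintro _ ⟨g, rfl⟩
    exact Subgroup.subset_closure (hinl g)
  · rw [MonoidHom.range_eq_map, ← Subgroup.closure_closure_coe_preimage, MonoidHom.map_closure]
    refine Subgroup.closure_mono ?_
    rintro _ ⟨s, hs, rfl⟩
    exact hinr s hs

namespace FreelyIndecomposable

theorem of_mulEquiv (hG : FreelyIndecomposable G) (e : G ≃* H) : FreelyIndecomposable H := by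
  have := hG.1
  refine ⟨e.symm.toEquiv.nontrivial, fun A B _ _ _ _ => ⟨fun f => ?_⟩⟩
  -- Copies of `A` and `B` inside `G` live in the universe of `G`.
  let ψ : Monoid.Coprod A B ≃* G := f.symm.trans e.symm
  let eA := MonoidHom.ofInjective (f := ψ.toMonoidHom.comp Monoid.Coprod.inl)
    (ψ.injective.comp Monoid.Coprod.inl_injective)
  let eB := MonoidHom.ofInjective (f := ψ.toMonoidHom.comp Monoid.Coprod.inr)
    (ψ.injective.comp Monoid.Coprod.inr_injective)
  exact (hG.2 _ _ eA.symm.toEquiv.nontrivial eB.symm.toEquiv.nontrivial).false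
    (ψ.symm.trans (MulEquiv.coprodCongr eA eB))

theorem eq_bot_or_eq_top_of_isFreeFactor (hG : FreelyIndecomposable G) {L : Subgroup G}
    (hL : IsFreeFactor L) : L = ⊥ ∨ L = ⊤ := by
  obtain ⟨M, hM⟩ := hL
  by_contra! hne
  have hM_bot : M ≠ ⊥ := by
    rintro rfl
    have hrange := MonoidHom.range_eq_top.2 hM.surjective
    rw [Monoid.Coprod.range_lift, Subgroup.range_subtype, Subgroup.range_subtype,
      sup_bot_eq] at hrange
    exact hne.2 hrange
  exact (hG.2 L M ((Subgroup.nontrivial_iff_ne_bot L).2 hne.1)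
    ((Subgroup.nontrivial_iff_ne_bot M).2 hM_bot)).false (MulEquiv.ofBijective _ hM).symm

end FreelyIndecomposable

end FreeFactor

section FreeProduct

open Monoid CoprodI

variable {ι : Type*} {A : ι → Type*} [∀ i, Group (A i)]

theorem disjoint_range_coprodI_of {i j : ι} (hij : i ≠ j) :
    Disjoint (of : A i →* CoprodI A).range (of : A j →* CoprodI A).range := by
  classical
  rw [Subgroup.disjoint_def]
  rintro _ ⟨a, rfl⟩ ⟨b, hb⟩
  have h := congrArg (lift (Pi.mulSingle i (MonoidHom.id (A i)))) hb
  rw [lift_of, lift_of, Pi.mulSingle_eq_same, Pi.mulSingle_eq_of_ne hij.symm] at h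
  rw [← show 1 = a from h, map_one]

variable {X Q : Type*} [Group Q] [MulAction (CoprodI A) X]

theorem exists_isCocycle_coprodI (c : ∀ i, A i → X → Q)
    (hc : ∀ i a b x, c i (a * b) x = c i a ((of b : CoprodI A) • x) * c i b x) :
    ∃ C : CoprodI A → X → Q, IsCocycle C ∧ ∀ i (a : A i) x, C (of a) x = c i a x := by
  have h_smul (g : CoprodI A) (f : X → Q) (x : X) : mulAutArrow g f x = f (g⁻¹ • x) := rfl
  -- A cocycle is a section of the projection of the unrestricted wreath product to `CoprodI A`.
  let F : CoprodI A →* (X → Q) ⋊[mulAutArrow] CoprodI A := lift fun i =>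
    MonoidHom.mk' (fun a => ⟨fun x => c i a ((of a : CoprodI A)⁻¹ • x), of a⟩) fun a b => by
      ext x
      · simp [hc, mul_smul, h_smul, -mulAutArrow_apply_apply]
      · simp
  have hF : ∀ i (a : A i), F (of a) = ⟨fun x => c i a ((of a : CoprodI A)⁻¹ • x), of a⟩ :=
    fun i a => by simp [F]
  have hF_right (g) : (F g).right = g := by
    have h : SemidirectProduct.rightHom.comp F = MonoidHom.id _ :=
      CoprodI.ext_hom _ _ fun i => MonoidHom.ext fun a => by simp [hF]
    exact DFunLike.congr_fun h g
  refine ⟨fun g x => (F g).left (g • x), fun g h x => ?_, fun i a x => by simp [hF]⟩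
  simp [hF_right, mul_smul, h_smul, -mulAutArrow_apply_apply]

theorem IsCocycle.ext_coprodI {c c' : CoprodI A → X → Q} (hc : IsCocycle c) (hc' : IsCocycle c')
    (h : ∀ i (a : A i) x, c (of a) x = c' (of a) x) (g : CoprodI A) (x : X) : c g x = c' g x := by
  induction g using CoprodI.induction_on generalizing x with
  | one => rw [hc.apply_one, hc'.apply_one]
  | of i a => exact h i a x
  | mul g₁ g₂ ih₁ ih₂ => rw [hc, hc', ih₁, ih₂]

theorem IsCocycle.exists_lift_coprod {c : CoprodI A → X → Q} (hc : IsCocycle c) {D : Set (ι × X)}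
    (hD : ∀ i (a : A i) x, (i, (of a : CoprodI A) • x) ∈ D ↔ (i, x) ∈ D) {L M : Subgroup Q}
    (hL : ∀ i (a : A i) x, (i, x) ∈ D → c (of a) x ∈ L)
    (hM : ∀ i (a : A i) x, (i, x) ∉ D → c (of a) x ∈ M) :
    ∃ C : CoprodI A → X → Coprod L M, IsCocycle C ∧
      (∀ g x, Coprod.lift L.subtype M.subtype (C g x) = c g x) ∧
      (∀ i (a : A i) x, (i, x) ∈ D → C (of a) x ∈ (Coprod.inl : L →* Coprod L M).range) ∧
      ∀ i (a : A i) x, (i, x) ∉ D → C (of a) x ∈ (Coprod.inr : M →* Coprod L M).range := by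
  classical
  obtain ⟨C, hC, hCof⟩ := exists_isCocycle_coprodI
    (fun i a x => if h : (i, x) ∈ D then (Coprod.inl ⟨c (of a) x, hL i a x h⟩ : Coprod L M)
      else Coprod.inr ⟨c (of a) x, hM i a x h⟩) fun i a b x => by
    by_cases h : (i, x) ∈ D <;>
      simp only [hD, h, dite_true, dite_false, map_mul, hc (of a), ← map_mul Coprod.inl,
        ← map_mul Coprod.inr, MulMemClass.mk_mul_mk]
  refine ⟨C, hC, (hC.monoidHom_comp _).ext_coprodI hc fun i a x => ?_, fun i a x h => ?_,
    fun i a x h => ?_⟩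
  · by_cases h : (i, x) ∈ D <;> simp [hCof, h]
  · simp [hCof, h]
  · simp [hCof, h]

/-- `AvoidingPath D x g` says that `g` is a product of elements of the factors which, read from
right to left as a path in `X` starting at `x`, never applies an element of the `i`-th factor at a
point `y` with `(i, y) ∈ D`. -/
inductive AvoidingPath (D : Set (ι × X)) (x : X) : CoprodI A → Prop
  | one : AvoidingPath D x 1
  | of_mul {i : ι} (a : A i) {g : CoprodI A} (h : (i, g • x) ∉ D) (hg : AvoidingPath D x g) :
      AvoidingPath D x (of a * g)

theorem AvoidingPath.cocycle_mem {D : Set (ι × X)} {x : X} {g : CoprodI A}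
    (hg : AvoidingPath D x g) {c : CoprodI A → X → Q} (hc : IsCocycle c) {M : Subgroup Q}
    (hM : ∀ i (a : A i) x, (i, x) ∉ D → c (of a) x ∈ M) : c g x ∈ M := by
  induction hg with
  | one => exact hc.apply_one x ▸ M.one_mem
  | of_mul a h _ ih => exact hc _ _ x ▸ M.mul_mem (hM _ a _ h) ih

theorem exists_avoidingPath {D : Set (ι × X)} {Y : Set X}
    (hY : ∀ i (a : A i) x, (i, x) ∈ D → (of a : CoprodI A) • x ∈ Y) {x : X} (hx : x ∈ Y)
    (g : CoprodI A) : ∃ y ∈ Y, ∃ p : CoprodI A, AvoidingPath D y p ∧ p • y = g • x := by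
  induction g using CoprodI.induction_left with
  | one => exact ⟨x, hx, 1, .one, rfl⟩
  | @mul i a g ih =>
    obtain ⟨y, hy, p, hp, hpy⟩ := ih
    rw [mul_smul, ← hpy]
    by_cases h : (i, p • y) ∈ D
    · exact ⟨_, hY i a _ h, 1, .one, one_smul _ _⟩
    · exact ⟨y, hy, _, hp.of_mul a h, mul_smul _ _ _⟩

variable (A) in
/-- The orbit of `o` under the `j`-th factor. -/
def factorOrbit (j : ι) (o : X) : Set X :=
  MulAction.orbit (of : A j →* CoprodI A).range o

variable (A) in
/-- The orbit of `o` under the `j`-th factor as a set of pairs for `AvoidingPath`. These pairs are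
the places where the Schreier elements are assigned to the free factor inside the `j`-th factor. -/
def factorEdges (j : ι) (o : X) : Set (ι × X) :=
  {j} ×ˢ factorOrbit A j o

theorem self_mem_factorOrbit (j : ι) (o : X) : o ∈ factorOrbit A j o :=
  MulAction.mem_orbit_self o

theorem of_smul_mem_factorOrbit_iff {j : ι} (o : X) (a : A j) (x : X) :
    (of a : CoprodI A) • x ∈ factorOrbit A j o ↔ x ∈ factorOrbit A j o := by
  rw [factorOrbit, ← MulAction.orbit_eq_iff, ← MulAction.orbit_eq_iff,
    ← MulAction.orbit_smul (⟨of a, a, rfl⟩ : (of : A j →* CoprodI A).range) x]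
  rfl

theorem of_smul_mem_factorEdges_iff {j : ι} (o : X) {i : ι} (a : A i) (x : X) :
    (i, (of a : CoprodI A) • x) ∈ factorEdges A j o ↔ (i, x) ∈ factorEdges A j o :=
  and_congr_right <| by
    rintro rfl
    exact of_smul_mem_factorOrbit_iff o a x

/-- A transversal of the stabilizer of `o` whose values on the orbit of `o` under the `j`-th factor
lie in this factor, and whose other values prolong these along paths which avoid the `j`-th factor
inside the orbit. -/
structure IsAdaptedTransversal (j : ι) (o : X) (t : X → CoprodI A) : Prop where
  smul_eq : ∀ x, t x • o = x
  base_eq_one : t o = 1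
  mem_range_of : ∀ x ∈ factorOrbit A j o, t x ∈ (of : A j →* CoprodI A).range
  exists_path : ∀ x, ∃ y ∈ factorOrbit A j o, ∃ p : CoprodI A,
    AvoidingPath (factorEdges A j o) y p ∧ t x = p * t y

theorem exists_avoidingPath_factorEdges [MulAction.IsPretransitive (CoprodI A) X] (j : ι)
    (o x : X) :
    ∃ y ∈ factorOrbit A j o, ∃ p : CoprodI A, AvoidingPath (factorEdges A j o) y p ∧ p • y = x ∧
      (x ∈ factorOrbit A j o → y = x ∧ p = 1) := by
  by_cases hx : x ∈ factorOrbit A j o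
  · exact ⟨x, hx, 1, .one, one_smul _ _, fun _ => ⟨rfl, rfl⟩⟩
  · obtain ⟨g, rfl⟩ := MulAction.exists_smul_eq (CoprodI A) o x
    obtain ⟨y, hy, p, hp, hpy⟩ := exists_avoidingPath
      (fun i a x h => ((of_smul_mem_factorEdges_iff o a x).2 h).2) (self_mem_factorOrbit j o) g
    exact ⟨y, hy, p, hp, hpy, fun h => absurd h hx⟩

theorem exists_isAdaptedTransversal [MulAction.IsPretransitive (CoprodI A) X] (j : ι) (o : X) :
    ∃ t : X → CoprodI A, IsAdaptedTransversal j o t := by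
  choose y hy p hp hpy hO using exists_avoidingPath_factorEdges (A := A) j o
  choose r hr using fun x => MulAction.mem_orbit_iff.1 (hy x)
  have hyy (x : X) : y (y x) = y x ∧ p (y x) = 1 := hO _ (hy x)
  let u (x : X) : CoprodI A := p x * r (y x)
  have hu (x : X) : u x • o = x := by
    rw [mul_smul, ← Subgroup.smul_def, hr, (hyy x).1, hpy]
  have hu_of (x : X) (hx : x ∈ factorOrbit A j o) : u x ∈ (of : A j →* CoprodI A).range := by
    simp only [u, (hO x hx).2, one_mul, SetLike.coe_mem]
  have hu_path (x : X) : u x = p x * u (y x) := by simp [u, hyy]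
  -- `u o` stabilizes `o`, so right multiplication by its inverse normalizes the value at `o`.
  refine ⟨fun x => u x * (u o)⁻¹, fun x => ?_, mul_inv_cancel _,
    fun x hx => mul_mem (hu_of x hx) (inv_mem (hu_of o (self_mem_factorOrbit j o))),
    fun x => ⟨y x, hy x, p x, hp x, ?_⟩⟩
  · rw [mul_smul, inv_smul_eq_iff.2 (hu o).symm, hu]
  · simp only [hu_path x, mul_assoc]

namespace IsAdaptedTransversal

variable {j : ι} {o : X} {t : X → CoprodI A}

theorem schreierCocycle_mem (ht : IsAdaptedTransversal j o t) {i : ι} (a : A i) {x : X}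
    (hx : (i, x) ∈ factorEdges A j o) :
    (schreierCocycle ht.smul_eq (of a) x : CoprodI A) ∈ (of : A j →* CoprodI A).range := by
  have hax := (of_smul_mem_factorEdges_iff o a x).2 hx
  obtain ⟨rfl, hxO⟩ := hx
  exact mul_mem (mul_mem (inv_mem (ht.mem_range_of _ hax.2)) ⟨a, rfl⟩) (ht.mem_range_of _ hxO)

theorem cocycle_apply_eq_one (ht : IsAdaptedTransversal j o t)
    {L M : Subgroup (MulAction.stabilizer (CoprodI A) o)} {C : CoprodI A → X → Coprod L M}
    (hC : IsCocycle C)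
    (hlift : ∀ g x, Coprod.lift L.subtype M.subtype (C g x) = schreierCocycle ht.smul_eq g x)
    (hinl : ∀ i (a : A i) x, (i, x) ∈ factorEdges A j o →
      C (of a) x ∈ (Coprod.inl : L →* Coprod L M).range)
    (hinr : ∀ i (a : A i) x, (i, x) ∉ factorEdges A j o →
      C (of a) x ∈ (Coprod.inr : M →* Coprod L M).range) (x : X) :
    C (t x) o = 1 := by
  have hlift_t (x : X) : Coprod.lift L.subtype M.subtype (C (t x) o) =
      Coprod.lift L.subtype M.subtype 1 := by
    rw [hlift, schreierCocycle_transversal ht.smul_eq ht.base_eq_one, map_one]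
  have h_orbit (y : X) (hy : y ∈ factorOrbit A j o) : C (t y) o = 1 := by
    obtain ⟨a, ha⟩ := ht.mem_range_of y hy
    exact injOn_coprodLift_range_inl L M
      (ha ▸ hinl j a o ⟨rfl, self_mem_factorOrbit j o⟩) (one_mem _) (hlift_t y)
  obtain ⟨y, hy, p, hp, htp⟩ := ht.exists_path x
  refine injOn_coprodLift_range_inr L M ?_ (one_mem _) (hlift_t x)
  rw [htp, hC, ht.smul_eq, h_orbit y hy, mul_one]
  exact hp.cocycle_mem hC hinr

end IsAdaptedTransversal

theorem isFreeFactor_range_of_subgroupOf_stabilizer [MulAction.IsPretransitive (CoprodI A) X]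
    (j : ι) (o : X) :
    IsFreeFactor ((of : A j →* CoprodI A).range.subgroupOf
      (MulAction.stabilizer (CoprodI A) o)) := by
  obtain ⟨t, ht⟩ := exists_isAdaptedTransversal (A := A) j o
  let c := schreierCocycle ht.smul_eq
  let S := {k | ∃ i, ∃ a : A i, ∃ x, (i, x) ∉ factorEdges A j o ∧ c (of a) x = k}
  obtain ⟨C, hC, hlift, hinl, hinr⟩ :=
    (isCocycle_schreierCocycle ht.smul_eq).exists_lift_coprod
      (L := (of : A j →* CoprodI A).range.subgroupOf _) (M := Subgroup.closure S)
      (fun i a x => of_smul_mem_factorEdges_iff o a x) (fun i a x => ht.schreierCocycle_mem a)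
      fun i a x hx => Subgroup.subset_closure ⟨i, a, x, hx, rfl⟩
  refine ⟨Subgroup.closure S, hC.bijective_of_lift_schreierCocycle ht.smul_eq
    (ht.cocycle_apply_eq_one hC hlift hinl hinr) hlift
    (closure_coprod_eq_top (fun l => ?_) fun k hk => ?_)⟩
  · obtain ⟨k, a, ha : of a = (k : CoprodI A)⟩ := l
    refine ⟨k, o, injOn_coprodLift_range_inl _ _
      (ha ▸ hinl j a o ⟨rfl, self_mem_factorOrbit j o⟩) ⟨_, rfl⟩ ?_⟩
    rw [hlift, Coprod.lift_apply_inl]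
    exact schreierCocycle_stabilizer ht.smul_eq ht.base_eq_one k
  · obtain ⟨i, a, x, hx, rfl⟩ := hk
    refine ⟨of a, x, injOn_coprodLift_range_inr _ _ (hinr i a x hx) ⟨_, rfl⟩ ?_⟩
    rw [hlift, Coprod.lift_apply_inr]
    rfl

theorem isFreeFactor_range_of_subgroupOf (j : ι) (K : Subgroup (CoprodI A)) :
    IsFreeFactor ((of : A j →* CoprodI A).range.subgroupOf K) := by
  have h := isFreeFactor_range_of_subgroupOf_stabilizer (A := A) j ((1 : CoprodI A) : CoprodI A ⧸ K)
  rwa [MulAction.stabilizer_quotient] at h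

namespace FreelyIndecomposable

theorem le_range_of {K : Subgroup (CoprodI A)} (hK : FreelyIndecomposable K) {j : ι}
    (hj : ¬ Disjoint (of : A j →* CoprodI A).range K) : K ≤ (of : A j →* CoprodI A).range := by
  rw [← Subgroup.subgroupOf_eq_bot] at hj
  rw [← Subgroup.subgroupOf_eq_top]
  exact (hK.eq_bot_or_eq_top_of_isFreeFactor (isFreeFactor_range_of_subgroupOf j K)).resolve_left hj

theorem range_le_range_of {G : Type*} [Group G] (hG : FreelyIndecomposable G)
    {f : G →* CoprodI A} (hf : Function.Injective f) {H : Subgroup G} (hH : H ≠ ⊥) {j : ι}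
    (hj : H.map f ≤ (of : A j →* CoprodI A).range) : f.range ≤ (of : A j →* CoprodI A).range :=
  (hG.of_mulEquiv (MonoidHom.ofInjective hf)).le_range_of fun hdisj =>
    hH <| (H.map_eq_bot_iff_of_injective hf).1 <| le_bot_iff.1 <|
      hdisj hj (Subgroup.map_le_range f H)

end FreelyIndecomposable

theorem index_eq_of_le_range_of {K : Subgroup (CoprodI A)} (hK : K ≠ ⊥) {i j : ι}
    (hi : K ≤ (of : A i →* CoprodI A).range) (hj : K ≤ (of : A j →* CoprodI A).range) : i = j := by
  by_contra hij
  exact hK (le_bot_iff.1 (disjoint_range_coprodI_of hij hi hj))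

end FreeProduct

theorem stmt8_general {ι κ : Type*} {A : ι → Type*} {B : κ → Type*}
    [∀ i, Group (A i)] [∀ k, Group (B k)] (hA : ∀ i, FreelyIndecomposable (A i))
    {φ : Monoid.CoprodI A →* Monoid.CoprodI B} (hφ : Function.Injective φ)
    {H : ∀ i, Subgroup (A i)} (hH : ∀ i, H i ≠ ⊥) {σ : ι → κ}
    (hσ : ∀ i, ((H i).map (Monoid.CoprodI.of : A i →* Monoid.CoprodI A)).map φ ≤
      (Monoid.CoprodI.of : B (σ i) →* Monoid.CoprodI B).range) :
    (∀ σ' : ι → κ,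
      (∀ i, ((H i).map (Monoid.CoprodI.of : A i →* Monoid.CoprodI A)).map φ ≤
        (Monoid.CoprodI.of : B (σ' i) →* Monoid.CoprodI B).range) → σ' = σ) ∧
    ∀ i, (Monoid.CoprodI.of : A i →* Monoid.CoprodI A).range.map φ ≤
      (Monoid.CoprodI.of : B (σ i) →* Monoid.CoprodI B).range := by
  have hinj (i) : Function.Injective (φ.comp (Monoid.CoprodI.of : A i →* Monoid.CoprodI A)) :=
    hφ.comp (Monoid.CoprodI.of_injective i)
  simp only [Subgroup.map_map, ← MonoidHom.range_comp] at hσ ⊢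
  refine ⟨fun σ' hσ' => funext fun i => ?_,
    fun i => (hA i).range_le_range_of (hinj i) (hH i) (hσ i)⟩
  have hne := mt ((H i).map_eq_bot_iff_of_injective (hinj i)).1 (hH i)
  exact index_eq_of_le_range_of hne (hσ' i) (hσ i)

/-- Let `G = A₁ * ⋯ * Aₘ` and `G' = A₁' * ⋯ * Aₘ'` be free products in which
every factor is freely indecomposable and not infinite cyclic, and let `φ : G → G'` be an
isomorphism.  Suppose that for each `i` there is a nontrivial subgroup `H i ≤ A i` with
`φ(H i) ≤ A' (σ i)` for some function `σ`.  Then `σ` is uniquely determined (here all `H i` are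
nontrivial), and for each `i`, `φ(A i) ≤ A' (σ i)`. -/
theorem stmt8 {m : ℕ} {A A' : Fin m → Type u}
    [∀ i, Group (A i)] [∀ i, Group (A' i)]
    (hA : ∀ i, FreelyIndecomposable (A i) ∧ IsEmpty (A i ≃* Multiplicative ℤ))
    (hA' : ∀ i, FreelyIndecomposable (A' i) ∧ IsEmpty (A' i ≃* Multiplicative ℤ))
    (φ : Monoid.CoprodI A ≃* Monoid.CoprodI A')
    (H : ∀ i, Subgroup (A i)) (hH : ∀ i, H i ≠ ⊥)
    (σ : Fin m → Fin m)
    (hσ : ∀ i, Subgroup.map φ.toMonoidHom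
        (Subgroup.map (Monoid.CoprodI.of : A i →* Monoid.CoprodI A) (H i)) ≤
        (Monoid.CoprodI.of : A' (σ i) →* Monoid.CoprodI A').range) :
    (∀ σ' : Fin m → Fin m,
      (∀ i, Subgroup.map φ.toMonoidHom
          (Subgroup.map (Monoid.CoprodI.of : A i →* Monoid.CoprodI A) (H i)) ≤
          (Monoid.CoprodI.of : A' (σ' i) →* Monoid.CoprodI A').range) → σ' = σ) ∧
    (∀ i, Subgroup.map φ.toMonoidHom
        (Monoid.CoprodI.of : A i →* Monoid.CoprodI A).range ≤
        (Monoid.CoprodI.of : A' (σ i) →* Monoid.CoprodI A').range) :=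
  stmt8_general (fun i => (hA i).1) φ.injective hH hσ
end
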